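/- Let f : ℕ → {-1, 1} be the completely multiplicative function determined by a set of 'negative' primes 𝒫 with ∑_{p ∈ 𝒫} 1/p < ∞ (f(p) = -1 for p ∈ 𝒫, f(p) = 1 otherwise). Then the density of n such that f(n) ≠ f(n+1) exists and equals 1/2 - (1/2)·∏_{p ∈ 𝒫} (1 - 4/(p+1)), provided 2 ∉ 𝒫 (or with the appropriate convergent product in general). -/

import Mathlib

open Finset Filter
open scoped Classical

/-!
Let `f` be completely multiplicative with `f p = 1` for all primes outside `P`. For `Q ≠ 0` the
truncation `n ↦ f (gcd Q n)` is periodic modulo `Q` and agrees with `f` at `n` unless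
`p ^ (v_p(Q) + 1) ∣ n` for some `p ∈ P`; the density of these exceptions is at most
`∑_{p ∈ P} p ^ (-v_p(Q) - 1)`. Along `Q = k!` this sum tends to `0`, uniformly enough that the mean
value of `f n * f (n + 1)` is the limit of the mean values of `f (gcd Q n) * f (gcd Q (n + 1))` over
a period. By the Chinese remainder theorem the latter are multiplicative in `Q`, so they are finite
products of local factors, and dominated convergence turns their limit into a product over `P`. The
local factors are computable because `p` never divides both `n` and `n + 1`. Finally, when `f = ±1`,
the indicator of `f n ≠ f (n + 1)` is `(1 - f n * f (n + 1)) / 2`.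
-/

section PeriodicSums

theorem sum_Ico_eq_sum_range_of_periodic {M : Type*} [AddCommMonoid M] {g : ℕ → M} {a : ℕ}
    (hg : Function.Periodic g a) (n : ℕ) :
    ∑ i ∈ Ico n (n + a), g i = ∑ i ∈ range a, g i := by
  calc ∑ i ∈ Ico n (n + a), g i = (((Multiset.Ico n (n + a)).map (· % a)).map g).sum := by
        simp only [Multiset.map_map, Function.comp_def, hg.map_mod_nat]; rfl
    _ = ∑ i ∈ range a, g i := by rw [Nat.multiset_Ico_map_mod]; rfl

theorem sum_range_mul_of_periodic_of_coprime {R : Type*} [CommSemiring R] {g h : ℕ → R}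
    {a b : ℕ} (hg : Function.Periodic g a) (hh : Function.Periodic h b) (ha : a ≠ 0) (hb : b ≠ 0)
    (hab : a.Coprime b) :
    ∑ n ∈ range (a * b), g n * h n = (∑ n ∈ range a, g n) * ∑ n ∈ range b, h n := by
  rw [sum_mul_sum, ← sum_product']
  refine sum_nbij (fun n => (n % a, n % b)) (fun n _ => ?_) (fun m hm n hn hmn => ?_) ?_
    fun n _ => by rw [hg.map_mod_nat, hh.map_mod_nat]
  · simp [Nat.mod_lt, Nat.pos_of_ne_zero, ha, hb]
  · exact ((Nat.modEq_and_modEq_iff_modEq_mul hab).1 (Prod.mk.inj hmn)).eq_of_lt_of_lt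
      (Finset.mem_range.1 hm) (Finset.mem_range.1 hn)
  · rintro ⟨i, j⟩ hij
    simp only [coe_product, coe_range, Set.mem_prod, Set.mem_Iio] at hij
    obtain ⟨n, hi, hj⟩ := Nat.chineseRemainder hab i j
    refine ⟨n % (a * b), by simp [Nat.mod_lt, Nat.pos_of_ne_zero, ha, hb], Prod.ext ?_ ?_⟩
    · exact (Nat.mod_mul_right_mod n a b).trans (Eq.trans hi (Nat.mod_eq_of_lt hij.1))
    · exact (Nat.mod_mul_left_mod n a b).trans (Eq.trans hj (Nat.mod_eq_of_lt hij.2))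

end PeriodicSums

section MeanValue

open scoped Topology

variable {E : Type*} [NormedAddCommGroup E] [NormedSpace ℝ E]

/-- The sequence `g` has mean value `m`: its averages over `1, …, N` tend to `m`. -/
def HasMeanValue (g : ℕ → E) (m : E) : Prop :=
  Tendsto (fun N : ℕ => (N : ℝ)⁻¹ • ∑ n ∈ Icc 1 N, g n) atTop (𝓝 m)

theorem exists_norm_le_of_periodic {F : Type*} [SeminormedAddGroup F] {D : ℕ → F} {a : ℕ}
    (hD : Function.Periodic D a) (ha : a ≠ 0) : ∃ C, ∀ n, ‖D n‖ ≤ C := by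
  refine ⟨∑ n ∈ range a, ‖D n‖, fun n => ?_⟩
  rw [← hD.map_mod_nat]
  exact single_le_sum (f := fun n => ‖D n‖) (fun _ _ => norm_nonneg _)
    (Finset.mem_range.2 (Nat.mod_lt _ (Nat.pos_of_ne_zero ha)))

theorem hasMeanValue_of_periodic {g : ℕ → E} {a : ℕ} (hg : Function.Periodic g a) (ha : a ≠ 0) :
    HasMeanValue g ((a : ℝ)⁻¹ • ∑ n ∈ range a, g n) := by
  set m := (a : ℝ)⁻¹ • ∑ n ∈ range a, g n with hm
  -- The deviation from the mean is periodic, hence bounded.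
  let D (N : ℕ) : E := ∑ n ∈ Icc 1 N, g n - (N : ℝ) • m
  have hD : Function.Periodic D a := fun N => by
    have hperiod : ∑ n ∈ Ico (N + 1) (N + 1 + a), g n = (a : ℝ) • m := by
      rw [sum_Ico_eq_sum_range_of_periodic hg, hm, smul_inv_smul₀ (by exact_mod_cast ha)]
    have hsplit := sum_Ico_consecutive g (by omega : 1 ≤ N + 1) (by omega : N + 1 ≤ N + 1 + a)
    simp only [D, ← Ico_add_one_right_eq_Icc]
    rw [add_right_comm, ← hsplit, hperiod, Nat.cast_add, add_smul, add_sub_add_right_eq_sub]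
  obtain ⟨C, hC⟩ := exists_norm_le_of_periodic hD ha
  have hlim : Tendsto (fun N : ℕ => (N : ℝ)⁻¹ • D N) atTop (𝓝 0) :=
    tendsto_inv_atTop_nhds_zero_nat.zero_smul_isBoundedUnder_le
      (isBoundedUnder_of ⟨C, hC⟩)
  refine (zero_add m ▸ hlim.add_const m).congr' ?_
  filter_upwards [eventually_ne_atTop 0] with N hN
  rw [smul_sub, inv_smul_smul₀ (by exact_mod_cast hN), sub_add_cancel]

theorem hasMeanValue_of_tendsto {ι : Type*} {l : Filter ι} [l.NeBot] {g : ℕ → E} {h : ι → ℕ → E}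
    {m : ι → E} {μ : E} {δ : ι → ℝ} (hmean : ∀ i, HasMeanValue (h i) (m i))
    (herror : ∀ i N, ∑ n ∈ Icc 1 N, ‖g n - h i n‖ ≤ N * δ i) (hδ : Tendsto δ l (𝓝 0))
    (hm : Tendsto m l (𝓝 μ)) : HasMeanValue g μ := by
  have hdist (i : ι) (N : ℕ) :
      dist ((N : ℝ)⁻¹ • ∑ n ∈ Icc 1 N, g n) ((N : ℝ)⁻¹ • ∑ n ∈ Icc 1 N, h i n) ≤ |δ i| := by
    rw [dist_eq_norm, ← smul_sub, ← sum_sub_distrib, norm_smul, norm_inv, Real.norm_natCast]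
    refine inv_mul_le_of_le_mul₀ (Nat.cast_nonneg N) (abs_nonneg _) ?_
    exact (norm_sum_le _ _).trans ((herror i N).trans (by gcongr; exact le_abs_self _))
  have hunif : TendstoUniformly (fun i (N : ℕ) => (N : ℝ)⁻¹ • ∑ n ∈ Icc 1 N, h i n)
      (fun N : ℕ => (N : ℝ)⁻¹ • ∑ n ∈ Icc 1 N, g n) l :=
    Metric.tendstoUniformly_iff.2 fun ε hε =>
      ((hδ.abs).eventually_lt_const (by simpa using hε)).mono fun i hi N => (hdist i N).trans_lt hi
  exact hunif.tendsto_of_eventually_tendsto (Eventually.of_forall hmean) hm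

end MeanValue

theorem card_filter_exists_dvd_le {ι : Type*} {q : ι → ℕ}
    (hq : Summable fun i => 1 / (q i : ℝ)) (N : ℕ) :
    (#{n ∈ Icc 1 N | ∃ i, q i ∣ n} : ℝ) ≤ N * ∑' i, 1 / (q i : ℝ) := by
  set B := {n ∈ Icc 1 N | ∃ i, q i ∣ n}
  have hdvd : ∀ n : B, ∃ i, q i ∣ n := fun n => (mem_filter.1 n.2).2
  choose i hi using hdvd
  let T := B.attach.image i
  have hcover : B ⊆ T.biUnion fun i => {n ∈ Ioc 0 N | q i ∣ n} := fun n hn =>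
    mem_biUnion.2 ⟨i ⟨n, hn⟩, mem_image_of_mem i (mem_attach B ⟨n, hn⟩),
      mem_filter.2 ⟨(mem_filter.1 hn).1, hi ⟨n, hn⟩⟩⟩
  calc (#B : ℝ) ≤ ∑ i ∈ T, (#{n ∈ Ioc 0 N | q i ∣ n} : ℝ) := by
        exact_mod_cast (card_le_card hcover).trans card_biUnion_le
    _ ≤ ∑ i ∈ T, N * (1 / (q i : ℝ)) := by
        gcongr with i
        rw [Nat.Ioc_filter_dvd_card_eq_div, mul_one_div]
        exact Nat.cast_div_le
    _ ≤ N * ∑' i, 1 / (q i : ℝ) := by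
        rw [← mul_sum]
        gcongr
        exact hq.sum_le_tsum T fun i _ => by positivity

theorem map_mem_of_forall_prime_dvd {M : Type*} [CommMonoid M] (f : ℕ →* M) (S : Submonoid M)
    {n : ℕ} (hn : n ≠ 0) (hf : ∀ p, p.Prime → p ∣ n → f p ∈ S) : f n ∈ S := by
  rw [← Nat.prod_primeFactorsList hn, map_list_prod]
  refine S.list_prod_mem fun x hx => ?_
  obtain ⟨p, hp, rfl⟩ := List.mem_map.1 hx
  exact hf p (Nat.prime_of_mem_primeFactorsList hp) (Nat.dvd_of_mem_primeFactorsList hp)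

theorem prime_pow_factorization_succ_dvd_of_dvd_div_gcd {p Q n : ℕ} (hQ : Q ≠ 0)
    (hp : p ∣ n / Q.gcd n) : p ^ (Q.factorization p + 1) ∣ n := by
  have hgcd : 0 < Q.gcd n := Nat.gcd_pos_of_pos_left n (Nat.pos_of_ne_zero hQ)
  have hcop : (p ^ Q.factorization p).Coprime (Q / Q.gcd n) :=
    ((Nat.coprime_div_gcd_div_gcd hgcd).symm.coprime_dvd_left hp).pow_left _
  have hpow : p ^ Q.factorization p ∣ Q.gcd n := by
    refine hcop.dvd_of_dvd_mul_right ?_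
    rw [Nat.mul_div_cancel' (Nat.gcd_dvd_left Q n)]
    exact Nat.ordProj_dvd Q p
  rw [pow_succ, ← Nat.mul_div_cancel' (Nat.gcd_dvd_right Q n)]
  exact mul_dvd_mul hpow hp

theorem map_gcd_eq_of_forall_not_dvd {M : Type*} [CommMonoid M] {P : Set ℕ} {f : ℕ →* M}
    (hf : ∀ p, p.Prime → p ∉ P → f p = 1) {Q n : ℕ} (hQ : Q ≠ 0) (hn : n ≠ 0)
    (hndvd : ∀ p ∈ P, ¬ p ^ (Q.factorization p + 1) ∣ n) : f (Q.gcd n) = f n := by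
  have hdiv : f (n / Q.gcd n) = 1 := by
    refine Submonoid.mem_bot.1 (map_mem_of_forall_prime_dvd f ⊥ ?_ fun p hp hpn => ?_)
    · exact (Nat.div_pos (Nat.gcd_le_right Q (Nat.pos_of_ne_zero hn))
        (Nat.gcd_pos_of_pos_right Q (Nat.pos_of_ne_zero hn))).ne'
    · exact Submonoid.mem_bot.2 <| hf p hp fun hpP =>
        hndvd p hpP (prime_pow_factorization_succ_dvd_of_dvd_div_gcd hQ hpn)
  rw [← mul_one (f _), ← hdiv, ← map_mul, Nat.mul_div_cancel' (Nat.gcd_dvd_right Q n)]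

section GcdCorrelation

variable {M : Type*} [CommMonoid M]

/-- The correlation `f n * f (n + 1)` of consecutive values with `f` replaced by its truncation
`n ↦ f (gcd Q n)`; it is periodic in `n` modulo `Q`. -/
def gcdCorrelation (f : ℕ →* M) (Q n : ℕ) : M := f (Q.gcd n) * f (Q.gcd (n + 1))

theorem periodic_gcdCorrelation (f : ℕ →* M) (Q : ℕ) :
    Function.Periodic (gcdCorrelation f Q) Q := fun n => by
  simp only [gcdCorrelation, add_right_comm n Q 1, Nat.gcd_add_self_right]

theorem gcdCorrelation_mul (f : ℕ →* M) {Q R : ℕ} (hQR : Q.Coprime R) (n : ℕ) :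
    gcdCorrelation f (Q * R) n = gcdCorrelation f Q n * gcdCorrelation f R n := by
  simp only [gcdCorrelation, hQR.mul_gcd, map_mul, mul_mul_mul_comm]

theorem gcdCorrelation_prime_pow {R : Type*} [CommRing R] (f : ℕ →* R) {p : ℕ}
    (hp : p.Prime) (e n : ℕ) :
    gcdCorrelation f (p ^ e) n = f ((p ^ e).gcd n) + f ((p ^ e).gcd (n + 1)) - 1 := by
  have hgcd {m : ℕ} (hm : ¬ p ∣ m) : f ((p ^ e).gcd m) = 1 := by
    rw [((hp.coprime_iff_not_dvd.2 hm).pow_left e).gcd_eq_one, map_one]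
  -- At most one of `n` and `n + 1` is divisible by `p`.
  by_cases hn : p ∣ n
  · have hsucc : ¬ p ∣ n + 1 := fun h => hp.not_dvd_one ((Nat.dvd_add_right hn).1 h)
    rw [gcdCorrelation, hgcd hsucc, mul_one, add_sub_cancel_right]
  · rw [gcdCorrelation, hgcd hn, one_mul, add_sub_cancel_left]

variable {K : Type*} [Field K]

/-- The mean value over one period of the truncation `n ↦ f (gcd Q n)`, for `Q ≠ 0`. -/
def gcdMean (f : ℕ →* K) (Q : ℕ) : K := (∑ n ∈ range Q, f (Q.gcd n)) / Q

theorem gcdMean_one (f : ℕ →* K) : gcdMean f 1 = 1 := by simp [gcdMean]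

/-- The mean value over one period of `gcdCorrelation f Q`, for `Q ≠ 0`. -/
def gcdCorrelationMean (f : ℕ →* K) (Q : ℕ) : K := (∑ n ∈ range Q, gcdCorrelation f Q n) / Q

theorem gcdCorrelationMean_one (f : ℕ →* K) : gcdCorrelationMean f 1 = 1 := by
  simp [gcdCorrelationMean, gcdCorrelation]

theorem gcdCorrelationMean_mul (f : ℕ →* K) {Q R : ℕ} (hQR : Q.Coprime R) :
    gcdCorrelationMean f (Q * R) = gcdCorrelationMean f Q * gcdCorrelationMean f R := by
  obtain rfl | hQ := eq_or_ne Q 0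
  · simp [gcdCorrelationMean]
  obtain rfl | hR := eq_or_ne R 0
  · simp [gcdCorrelationMean]
  simp only [gcdCorrelationMean, gcdCorrelation_mul f hQR, Nat.cast_mul]
  rw [sum_range_mul_of_periodic_of_coprime (periodic_gcdCorrelation f Q)
    (periodic_gcdCorrelation f R) hQ hR hQR, div_mul_div_comm]

variable [CharZero K]

theorem gcdMean_prime_pow_succ (f : ℕ →* K) {p : ℕ} (hp : p.Prime) (e : ℕ) :
    gcdMean f (p ^ (e + 1)) = 1 - 1 / p + f p / p * gcdMean f (p ^ e) := by
  have hp0 : (p : K) ≠ 0 := by exact_mod_cast hp.ne_zero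
  have hmultiples : ∑ m ∈ range (p ^ e), (f p * f ((p ^ e).gcd m) - 1) =
      ∑ n ∈ range (p ^ (e + 1)), (f ((p ^ (e + 1)).gcd n) - 1) := by
    refine sum_of_injOn (p * ·) (mul_right_injective₀ hp.ne_zero).injOn ?_ ?_ ?_
    · intro m hm
      simpa [pow_succ', hp.pos] using hm
    · intro n hn hnp
      have hndvd : ¬ p ∣ n := by
        rintro ⟨m, rfl⟩
        exact hnp ⟨m, by simpa [pow_succ', hp.pos] using hn, rfl⟩
      rw [((hp.coprime_iff_not_dvd.2 hndvd).pow_left (e + 1)).gcd_eq_one, map_one, sub_self]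
    · intro m _
      rw [← map_mul, ← Nat.gcd_mul_left, pow_succ']
  simp only [sum_sub_distrib, ← mul_sum, sum_const, card_range, nsmul_eq_mul, mul_one]
    at hmultiples
  rw [gcdMean, gcdMean, ← sub_add_cancel (∑ n ∈ range (p ^ (e + 1)), _) ((p ^ (e + 1) : ℕ) : K),
    ← hmultiples]
  push_cast
  field_simp
  ring

theorem gcdMean_prime_pow (f : ℕ →* K) {p : ℕ} (hp : p.Prime) (hfp : f p ≠ p) (e : ℕ) :
    gcdMean f (p ^ e) = (p - 1) / (p - f p) + (f p / p) ^ e * (1 - (p - 1) / (p - f p)) := by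
  have hp0 : (p : K) ≠ 0 := by exact_mod_cast hp.ne_zero
  have hpf : (p : K) - f p ≠ 0 := sub_ne_zero.2 hfp.symm
  induction e with
  | zero => simp [gcdMean_one]
  | succ e ih =>
    rw [gcdMean_prime_pow_succ f hp, ih, pow_succ']
    field_simp
    ring

theorem gcdCorrelationMean_prime_pow (f : ℕ →* K) {p : ℕ} (hp : p.Prime) (e : ℕ) :
    gcdCorrelationMean f (p ^ e) = 2 * gcdMean f (p ^ e) - 1 := by
  have hp0 : (p : K) ≠ 0 := by exact_mod_cast hp.ne_zero
  have hperiodic : Function.Periodic (fun n => f ((p ^ e).gcd n)) (p ^ e) := fun n => by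
    simp only [Nat.gcd_add_self_right]
  have hshift : ∑ n ∈ range (p ^ e), f ((p ^ e).gcd (n + 1)) =
      ∑ n ∈ range (p ^ e), f ((p ^ e).gcd n) := by
    rw [← sum_Ico_eq_sum_range_of_periodic hperiodic 1, sum_Ico_eq_sum_range]
    simp only [add_comm 1, add_tsub_cancel_right]
  simp only [gcdCorrelationMean, gcdMean, gcdCorrelation_prime_pow f hp, sum_sub_distrib,
    sum_add_distrib, hshift, sum_const, card_range, nsmul_eq_mul, mul_one, Nat.cast_pow]
  field_simp
  ring

theorem gcdCorrelationMean_prime_pow_of_map_eq_one (f : ℕ →* K) {p : ℕ} (hp : p.Prime)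
    (hfp : f p = 1) (e : ℕ) : gcdCorrelationMean f (p ^ e) = 1 := by
  have hp1 : (p : K) - 1 ≠ 0 := sub_ne_zero.2 (by exact_mod_cast hp.ne_one)
  rw [gcdCorrelationMean_prime_pow f hp, gcdMean_prime_pow f hp (by
    rw [hfp]; exact_mod_cast hp.ne_one.symm), hfp, div_self hp1]
  ring

theorem gcdCorrelationMean_eq_tprod [TopologicalSpace K] {P : Set ℕ} {f : ℕ →* K}
    (hf : ∀ p, p.Prime → p ∉ P → f p = 1) {Q : ℕ} (hQ : Q ≠ 0) :
    gcdCorrelationMean f Q = ∏' p : P, gcdCorrelationMean f ((p : ℕ) ^ Q.factorization p) := by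
  let localMean (p : ℕ) : K := gcdCorrelationMean f (p ^ Q.factorization p)
  have hone (p : ℕ) (hp : p ∉ Q.primeFactors) : localMean p = 1 := by
    rw [← Nat.support_factorization] at hp
    simp only [localMean, Finsupp.notMem_support_iff.1 hp, pow_zero, gcdCorrelationMean_one]
  have hind : P.mulIndicator localMean = localMean := by
    refine Set.mulIndicator_eq_self.2 fun p hp => ?_
    by_contra hpP
    refine hp ?_
    by_cases hpQ : p ∈ Q.primeFactors
    · have hp' := Nat.prime_of_mem_primeFactors hpQ
      exact gcdCorrelationMean_prime_pow_of_map_eq_one f hp' (hf p hp' hpP) _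
    · exact hone p hpQ
  rw [_root_.tprod_subtype P localMean, hind, tprod_eq_prod hone,
    Nat.multiplicative_factorization (gcdCorrelationMean f)
      (fun _ _ => gcdCorrelationMean_mul f) (gcdCorrelationMean_one f) hQ]
  rfl

end GcdCorrelation

section Limit

open scoped Topology Nat

variable {𝕜 : Type*} [RCLike 𝕜] {f : ℕ →* 𝕜}

theorem norm_map_le_one (hf : ∀ p, p.Prime → ‖f p‖ ≤ 1) {n : ℕ} (hn : n ≠ 0) : ‖f n‖ ≤ 1 :=
  mem_closedBall_zero_iff.1 <| map_mem_of_forall_prime_dvd f (Submonoid.unitClosedBall 𝕜) hn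
    fun p hp _ => mem_closedBall_zero_iff.2 (hf p hp)

theorem norm_gcdMean_le_one (hf : ∀ p, p.Prime → ‖f p‖ ≤ 1) {Q : ℕ} (hQ : Q ≠ 0) :
    ‖gcdMean f Q‖ ≤ 1 := by
  rw [gcdMean, norm_div, RCLike.norm_natCast]
  refine div_le_one_of_le₀ ?_ (Nat.cast_nonneg Q)
  simpa using norm_sum_le_of_le (range Q) fun n _ =>
    norm_map_le_one hf (Nat.gcd_ne_zero_left (n := n) hQ)

theorem norm_gcdMean_prime_pow_sub_one_le (hf : ∀ p, p.Prime → ‖f p‖ ≤ 1) {p : ℕ} (hp : p.Prime)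
    (e : ℕ) : ‖gcdMean f (p ^ e) - 1‖ ≤ 2 * (1 / p) := by
  cases e with
  | zero => simp [gcdMean_one]
  | succ e =>
    have hstep : gcdMean f (p ^ (e + 1)) - 1 = (f p * gcdMean f (p ^ e) - 1) / p := by
      rw [gcdMean_prime_pow_succ f hp]
      ring
    rw [hstep, norm_div, RCLike.norm_natCast, mul_one_div]
    gcongr
    calc ‖f p * gcdMean f (p ^ e) - 1‖ ≤ ‖f p‖ * ‖gcdMean f (p ^ e)‖ + 1 := by
          simpa only [norm_mul, norm_one] using norm_sub_le (f p * gcdMean f (p ^ e)) 1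
      _ ≤ 1 * 1 + 1 := by
          gcongr
          exacts [hf p hp, norm_gcdMean_le_one hf (pow_ne_zero e hp.ne_zero)]
      _ = 2 := by norm_num

theorem norm_gcdCorrelationMean_prime_pow_sub_one_le (hf : ∀ p, p.Prime → ‖f p‖ ≤ 1) {p : ℕ}
    (hp : p.Prime) (e : ℕ) : ‖gcdCorrelationMean f (p ^ e) - 1‖ ≤ 4 * (1 / p) := by
  have hdouble : gcdCorrelationMean f (p ^ e) - 1 = 2 * (gcdMean f (p ^ e) - 1) := by
    rw [gcdCorrelationMean_prime_pow f hp]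
    ring
  rw [hdouble, norm_mul, RCLike.norm_ofNat]
  linarith [norm_gcdMean_prime_pow_sub_one_le hf hp e]

theorem tendsto_gcdCorrelationMean_prime_pow {p : ℕ} (hp : p.Prime) (hfp : ‖f p‖ < p) :
    Tendsto (fun e => gcdCorrelationMean f (p ^ e)) atTop
      (𝓝 (2 * ((p - 1) / (p - f p)) - 1)) := by
  have hne : f p ≠ p := fun h => by simp [h] at hfp
  have hratio : ‖f p / p‖ < 1 := by
    rw [norm_div, RCLike.norm_natCast, div_lt_one (by exact_mod_cast hp.pos)]
    exact hfp
  simp only [gcdCorrelationMean_prime_pow f hp, gcdMean_prime_pow f hp hne]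
  simpa using ((((tendsto_pow_atTop_nhds_zero_of_norm_lt_one hratio).mul_const
    (1 - ((p : 𝕜) - 1) / (p - f p))).const_add (((p : 𝕜) - 1) / (p - f p))).const_mul 2).sub_const 1

theorem tendsto_factorization_factorial {p : ℕ} (hp : p.Prime) :
    Tendsto (fun k : ℕ => (k !).factorization p) atTop atTop :=
  tendsto_atTop.2 fun e => (eventually_ge_atTop (p ^ e)).mono fun k hk =>
    (hp.pow_dvd_iff_le_factorization k.factorial_ne_zero).1
      (Nat.dvd_factorial (pow_pos hp.pos e) hk)

theorem tendsto_gcdCorrelationMean_factorial {P : Set ℕ} (hP : ∀ p ∈ P, p.Prime)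
    (hsum : Summable fun p : P => 1 / ((p : ℕ) : ℝ)) (hone : ∀ p, p.Prime → p ∉ P → f p = 1)
    (hbound : ∀ p, p.Prime → ‖f p‖ ≤ 1) :
    Tendsto (fun k : ℕ => gcdCorrelationMean f (k !)) atTop
      (𝓝 (∏' p : P, (2 * (((p : ℕ) - 1) / ((p : ℕ) - f p)) - 1))) := by
  have hlocal (p : P) : Tendsto
      (fun k : ℕ => gcdCorrelationMean f ((p : ℕ) ^ (k !).factorization p) - 1) atTop
      (𝓝 (2 * (((p : ℕ) - 1) / ((p : ℕ) - f p)) - 1 - 1)) := by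
    have hp := hP p p.2
    have hlt : ‖f p‖ < (p : ℕ) := (hbound p hp).trans_lt (by exact_mod_cast hp.one_lt)
    exact ((tendsto_gcdCorrelationMean_prime_pow hp hlt).comp
      (tendsto_factorization_factorial hp)).sub_const 1
  have hprod := tendsto_tprod_one_add_of_dominated_convergence (hsum.mul_left 4) hlocal
    (Eventually.of_forall fun k p => norm_gcdCorrelationMean_prime_pow_sub_one_le hbound
      (hP p p.2) _)
  simpa only [add_sub_cancel, ← gcdCorrelationMean_eq_tprod hone (Nat.factorial_ne_zero _)]
    using hprod

/-- The sum of the densities of the multiples of `p ^ (v_p(Q) + 1)` over `p ∈ P`. It bounds the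
density of the `n` with `f (gcd Q n) ≠ f n`, whenever `f` is completely multiplicative and trivial
at the primes outside `P`. -/
noncomputable def gcdDefect (P : Set ℕ) (Q : ℕ) : ℝ :=
  ∑' p : P, 1 / (((p : ℕ) ^ (Q.factorization p + 1) : ℕ) : ℝ)

theorem one_div_pow_succ_le_one_div {p : ℕ} (hp : p ≠ 0) (e : ℕ) :
    1 / ((p ^ (e + 1) : ℕ) : ℝ) ≤ 1 / (p : ℝ) :=
  one_div_le_one_div_of_le (by exact_mod_cast Nat.pos_of_ne_zero hp)
    (by exact_mod_cast Nat.le_self_pow e.succ_ne_zero p)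

theorem summable_gcdDefect {P : Set ℕ} (hP : 0 ∉ P)
    (hsum : Summable fun p : P => 1 / ((p : ℕ) : ℝ)) (Q : ℕ) :
    Summable fun p : P => 1 / (((p : ℕ) ^ (Q.factorization p + 1) : ℕ) : ℝ) :=
  hsum.of_nonneg_of_le (fun _ => by positivity) fun p =>
    one_div_pow_succ_le_one_div (ne_of_mem_of_not_mem p.2 hP) _

theorem tendsto_gcdDefect_factorial {P : Set ℕ} (hP : ∀ p ∈ P, p.Prime)
    (hsum : Summable fun p : P => 1 / ((p : ℕ) : ℝ)) :
    Tendsto (fun k : ℕ => gcdDefect P (k !)) atTop (𝓝 0) := by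
  have hlocal (p : P) : Tendsto
      (fun k : ℕ => 1 / (((p : ℕ) ^ ((k !).factorization p + 1) : ℕ) : ℝ)) atTop (𝓝 0) := by
    have hp := hP p p.2
    have hpow : Tendsto (fun e => 1 / (((p : ℕ) ^ (e + 1) : ℕ) : ℝ)) atTop (𝓝 0) :=
      tendsto_one_div_atTop_nhds_zero_nat.comp
        ((tendsto_pow_atTop_atTop_of_one_lt hp.one_lt).comp (tendsto_add_atTop_nat 1))
    exact hpow.comp (tendsto_factorization_factorial hp)
  have hbound (k : ℕ) (p : P) :
      ‖1 / (((p : ℕ) ^ ((k !).factorization p + 1) : ℕ) : ℝ)‖ ≤ 1 / ((p : ℕ) : ℝ) := by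
    rw [Real.norm_of_nonneg (by positivity)]
    exact one_div_pow_succ_le_one_div (hP p p.2).ne_zero _
  simpa only [tsum_zero, gcdDefect] using
    tendsto_tsum_of_dominated_convergence hsum hlocal (Eventually.of_forall hbound)

section Error

variable {P : Set ℕ} (hP : 0 ∉ P) (hsum : Summable fun p : P => 1 / ((p : ℕ) : ℝ))
  (hone : ∀ p, p.Prime → p ∉ P → f p = 1) (hbound : ∀ p, p.Prime → ‖f p‖ ≤ 1)
  {Q : ℕ} (hQ : Q ≠ 0)

include hP hsum hone hbound hQ

theorem sum_norm_sub_map_gcd_le (N : ℕ) :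
    ∑ n ∈ Icc 1 N, ‖f n - f (Q.gcd n)‖ ≤ 2 * N * gcdDefect P Q := by
  let Exceptional (n : ℕ) : Prop := ∃ p : P, (p : ℕ) ^ (Q.factorization p + 1) ∣ n
  have hterm : ∀ n ∈ Icc 1 N, ‖f n - f (Q.gcd n)‖ ≤ if Exceptional n then 2 else 0 := by
    intro n hn
    have hn0 : n ≠ 0 := Nat.one_le_iff_ne_zero.1 (Finset.mem_Icc.1 hn).1
    split_ifs with hexc
    · linarith [norm_sub_le (f n) (f (Q.gcd n)), norm_map_le_one hbound hn0,
        norm_map_le_one hbound (Nat.gcd_ne_zero_left (n := n) hQ)]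
    · have hndvd : ∀ p ∈ P, ¬ p ^ (Q.factorization p + 1) ∣ n := fun p hp hdvd =>
        hexc ⟨⟨p, hp⟩, hdvd⟩
      rw [map_gcd_eq_of_forall_not_dvd hone hQ hn0 hndvd, sub_self, norm_zero]
  calc ∑ n ∈ Icc 1 N, ‖f n - f (Q.gcd n)‖
      ≤ ∑ n ∈ Icc 1 N, if Exceptional n then (2 : ℝ) else 0 := sum_le_sum hterm
    _ = 2 * #{n ∈ Icc 1 N | Exceptional n} := by
        rw [← sum_filter, sum_const, nsmul_eq_mul, mul_comm]
    _ ≤ 2 * (N * gcdDefect P Q) := by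
        gcongr
        exact card_filter_exists_dvd_le (summable_gcdDefect hP hsum Q) N
    _ = 2 * N * gcdDefect P Q := by ring

theorem sum_norm_mul_succ_sub_gcdCorrelation_le (N : ℕ) :
    ∑ n ∈ Icc 1 N, ‖f n * f (n + 1) - gcdCorrelation f Q n‖ ≤ N * (6 * gcdDefect P Q) := by
  obtain rfl | hN := eq_or_ne N 0
  · simp
  let d (n : ℕ) : ℝ := ‖f n - f (Q.gcd n)‖
  have hterm (n : ℕ) : ‖f n * f (n + 1) - gcdCorrelation f Q n‖ ≤ d n + d (n + 1) := by
    have hfsucc := norm_map_le_one hbound n.succ_ne_zero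
    have hfgcd := norm_map_le_one hbound (Nat.gcd_ne_zero_left (n := n) hQ)
    calc ‖f n * f (n + 1) - gcdCorrelation f Q n‖
        = ‖(f n - f (Q.gcd n)) * f (n + 1) +
            f (Q.gcd n) * (f (n + 1) - f (Q.gcd (n + 1)))‖ := by
          rw [gcdCorrelation]
          ring_nf
      _ ≤ d n * ‖f (n + 1)‖ + ‖f (Q.gcd n)‖ * d (n + 1) := by
          simpa only [norm_mul] using
            norm_add_le ((f n - f (Q.gcd n)) * f (n + 1))
              (f (Q.gcd n) * (f (n + 1) - f (Q.gcd (n + 1))))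
      _ ≤ d n * 1 + 1 * d (n + 1) := by gcongr
      _ = d n + d (n + 1) := by ring
  have hshift : ∑ n ∈ Icc 1 N, d (n + 1) ≤ ∑ n ∈ Icc 1 (N + 1), d n := by
    calc ∑ n ∈ Icc 1 N, d (n + 1) = ∑ n ∈ Icc 2 (N + 1), d n := by
          rw [← map_add_right_Icc 1 N 1, sum_map]
          rfl
      _ ≤ ∑ n ∈ Icc 1 (N + 1), d n :=
          sum_le_sum_of_subset_of_nonneg (Icc_subset_Icc_left one_le_two) fun _ _ _ =>
            norm_nonneg _
  have hdefect : 0 ≤ gcdDefect P Q := tsum_nonneg fun _ => by positivity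
  have hN1 : ((N + 1 : ℕ) : ℝ) ≤ 2 * N := by
    exact_mod_cast (by omega : N + 1 ≤ 2 * N)
  calc ∑ n ∈ Icc 1 N, ‖f n * f (n + 1) - gcdCorrelation f Q n‖
      ≤ ∑ n ∈ Icc 1 N, d n + ∑ n ∈ Icc 1 N, d (n + 1) := by
        rw [← sum_add_distrib]
        exact sum_le_sum fun n _ => hterm n
    _ ≤ 2 * N * gcdDefect P Q + 2 * (N + 1 : ℕ) * gcdDefect P Q :=
        add_le_add (sum_norm_sub_map_gcd_le hP hsum hone hbound hQ N)
          (hshift.trans (sum_norm_sub_map_gcd_le hP hsum hone hbound hQ (N + 1)))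
    _ ≤ 2 * N * gcdDefect P Q + 2 * (2 * N) * gcdDefect P Q := by gcongr
    _ = N * (6 * gcdDefect P Q) := by ring

end Error

theorem hasMeanValue_gcdCorrelation (f : ℕ →* 𝕜) {Q : ℕ} (hQ : Q ≠ 0) :
    HasMeanValue (gcdCorrelation f Q) (gcdCorrelationMean f Q) := by
  have h := hasMeanValue_of_periodic (periodic_gcdCorrelation f Q) hQ
  rwa [RCLike.real_smul_eq_coe_mul, RCLike.ofReal_inv, RCLike.ofReal_natCast,
    ← div_eq_inv_mul] at h

theorem hasMeanValue_mul_succ {P : Set ℕ} (hP : ∀ p ∈ P, p.Prime)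
    (hsum : Summable fun p : P => 1 / ((p : ℕ) : ℝ)) (hone : ∀ p, p.Prime → p ∉ P → f p = 1)
    (hbound : ∀ p, p.Prime → ‖f p‖ ≤ 1) :
    HasMeanValue (fun n => f n * f (n + 1))
      (∏' p : P, (2 * (((p : ℕ) - 1) / ((p : ℕ) - f p)) - 1)) :=
  hasMeanValue_of_tendsto
    (fun k => hasMeanValue_gcdCorrelation f k.factorial_ne_zero)
    (fun k => sum_norm_mul_succ_sub_gcdCorrelation_le (fun h => Nat.not_prime_zero (hP 0 h)) hsum
      hone hbound k.factorial_ne_zero)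
    (by simpa using (tendsto_gcdDefect_factorial hP hsum).const_mul 6)
    (tendsto_gcdCorrelationMean_factorial hP hsum hone hbound)

end Limit

theorem card_filter_ne_succ_eq_sum {g : ℕ → ℝ} {s : Finset ℕ}
    (hg : ∀ n ∈ s, g n = 1 ∨ g n = -1) (hgsucc : ∀ n ∈ s, g (n + 1) = 1 ∨ g (n + 1) = -1) :
    (#{n ∈ s | g n ≠ g (n + 1)} : ℝ) = ∑ n ∈ s, (1 / 2 - 1 / 2 * (g n * g (n + 1))) := by
  rw [card_filter, Nat.cast_sum]
  refine sum_congr rfl fun n hn => ?_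
  rcases hg n hn with h | h <;> rcases hgsucc n hn with h' | h' <;> rw [h, h'] <;> norm_num

theorem tendsto_card_filter_ne_succ_div {g : ℕ → ℝ} {m : ℝ}
    (hg : ∀ n, n ≠ 0 → g n = 1 ∨ g n = -1) (hm : HasMeanValue (fun n => g n * g (n + 1)) m) :
    Tendsto (fun x : ℕ => (#{n ∈ Icc 1 x | g n ≠ g (n + 1)} : ℝ) / x) atTop
      (nhds (1 / 2 - 1 / 2 * m)) := by
  refine ((hm.const_mul (1 / 2)).const_sub (1 / 2)).congr' ?_
  filter_upwards [eventually_ne_atTop 0] with x hx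
  have hx0 : (x : ℝ) ≠ 0 := by exact_mod_cast hx
  rw [card_filter_ne_succ_eq_sum (fun n hn => hg n (by grind)) fun n _ => hg _ n.succ_ne_zero,
    sum_sub_distrib, ← mul_sum, sum_const, Nat.card_Icc, nsmul_eq_mul, smul_eq_mul,
    add_tsub_cancel_right]
  field_simp

theorem lucht_tuttas_sign_change_density_general {Pneg : Set ℕ}
    (hPneg : ∀ p ∈ Pneg, Nat.Prime p) (hsum : Summable (fun p : Pneg => 1 / ((p : ℕ) : ℝ)))
    (f : ℕ →* ℝ) (hfp : ∀ p : ℕ, p.Prime → f p = if p ∈ Pneg then -1 else 1) :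
    Tendsto (fun x : ℕ =>
        (((Finset.Icc 1 x).filter (fun n => f n ≠ f (n + 1))).card : ℝ) / x) atTop
      (nhds (1 / 2 - 1 / 2 * ∏' p : Pneg, (1 - 4 / (((p : ℕ) : ℝ) + 1)))) := by
  have hsq (p : ℕ) (hp : p.Prime) : f p * f p = 1 := by
    rw [hfp p hp]
    split_ifs <;> norm_num
  have hsign (n : ℕ) (hn : n ≠ 0) : f n = 1 ∨ f n = -1 :=
    mul_self_eq_one_iff.1 (map_mem_of_forall_prime_dvd (f * f) ⊥ hn fun p hp _ => hsq p hp)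
  have hbound (p : ℕ) (hp : p.Prime) : ‖f p‖ ≤ 1 := by
    rcases hsign p hp.ne_zero with h | h <;> simp [h]
  have hfactor (p : Pneg) :
      2 * (((p : ℕ) - 1) / ((p : ℕ) - f p)) - 1 = 1 - 4 / (((p : ℕ) : ℝ) + 1) := by
    rw [hfp p (hPneg p p.2), if_pos p.2, sub_neg_eq_add]
    field_simp
    ring
  have hmean := hasMeanValue_mul_succ hPneg hsum (fun p hp hpP => by rw [hfp p hp, if_neg hpP])
    hbound
  simp only [hfactor] at hmean
  exact tendsto_card_filter_ne_succ_div hsign hmean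

/-- Lucht–Tuttas: if `f` is the ±1-valued completely multiplicative function with
`f(p) = -1` exactly for `p` in a set `Pneg` of primes with `∑_{p ∈ Pneg} 1/p < ∞` and
`2 ∉ Pneg`, then the density of `n` with `f(n) ≠ f(n+1)` exists and equals
`1/2 - (1/2)∏_{p ∈ Pneg}(1 - 4/(p+1))`. -/
theorem lucht_tuttas_sign_change_density (Pneg : Set ℕ) (hPneg : ∀ p ∈ Pneg, Nat.Prime p)
    (h2 : 2 ∉ Pneg)
    (hsum : Summable (fun p : Pneg => 1 / ((p : ℕ) : ℝ)))
    (f : ℕ → ℝ) (hf1 : f 1 = 1) (hmul : ∀ m n, f (m * n) = f m * f n)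
    (hfp : ∀ p : ℕ, p.Prime → f p = if p ∈ Pneg then -1 else 1) :
    Tendsto (fun x : ℕ =>
        (((Finset.Icc 1 x).filter (fun n => f n ≠ f (n + 1))).card : ℝ) / x) atTop
      (nhds (1 / 2 - 1 / 2 * ∏' p : Pneg, (1 - 4 / (((p : ℕ) : ℝ) + 1)))) :=
  lucht_tuttas_sign_change_density_general hPneg hsum ⟨⟨f, hf1⟩, hmul⟩ hfp
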